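/- arXiv:2012.12022 — 4 statements merged into one kernel-verified Lean document; each statement's English description precedes it below -/
import Mathlib

section
/- For every n ≥ 1 there exist constants C₁, C₂ > 0 depending only on n such that for all weakly decreasing λ, x ∈ ℝ^{n+1}: C₁·R ≤ I⁽ⁿ⁾(λ;x) ≤ C₂·R, where R = [∏_{1≤i<j≤n+1}(x_i−x_j) · ∏_{1≤i<j≤n}(λ_i−λ_j)] / ∏_{1≤i<j≤n+1}(1+(λ_i−λ_j)(x_i−x_j)). -/
open Finset MeasureTheory

/-- The iterated integral `I⁽ⁿ⁾(λ;x)` over the box `y_k ∈ [x_{k+1}, x_k]`, `k = 1,…,n`, of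
`exp(−∑_k (λ_k−λ_{n+1})(x_k−y_k)) · ∏_{i<j≤n} (y_i−y_j)(λ_i−λ_j)/(1+(y_i−y_j)(λ_i−λ_j))`. -/
noncomputable def Iint (n : ℕ) (lam x : Fin (n + 1) → ℝ) : ℝ :=
  ∫ y in Set.Icc (fun k : Fin n => x k.succ) (fun k : Fin n => x k.castSucc),
    Real.exp (-∑ k : Fin n, (lam k.castSucc - lam (Fin.last n)) * (x k.castSucc - y k)) *
      ∏ i : Fin n, ∏ j ∈ Finset.Ioi i,
        ((y i - y j) * (lam i.castSucc - lam j.castSucc) /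
          (1 + (y i - y j) * (lam i.castSucc - lam j.castSucc)))

/-!
With `damp c t = t / (1 + c * t)`, which is `min t c⁻¹` up to a factor `2`, and after division by
`∏ (λ_i - λ_j)`, the claim compares `∫ exp (-∑ μ_k (x_k - y_k)) ∏ damp (λ_i - λ_j) (y_i - y_j)`,
where `μ_k = λ_k - λ_{n+1}`, with the product of `damp (λ_i - λ_j) (x_i - x_j)` over all pairs
`i < j ≤ n + 1`. The exponential confines `y_k` to a window below `x_k` of length
`m_k = damp μ_k (x_k - x_{k+1})`, where `y_i - y_j` is of the size of `x_i - x_j + m_j`. So the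
integral is comparable with `∏ m_i ∏ damp (λ_i - λ_j) (x_i - x_j + m_j)`. For each `i` the
increments `m_j` are then removed one after the other, for `j = i + 1, …, n`: removing `m_j` costs
a factor `2` if at the same time `damp μ_i (x_i - x_j)` is replaced by `damp μ_i (x_i - x_{j+1})`.
These replacements telescope from `m_i` to `damp μ_i (x_i - x_{n+1})`, the remaining factor of the
product.
-/

/-- The function `t ↦ t / (1 + c * t)`, which for `c, t ≥ 0` is `min t c⁻¹` up to a factor `2`. Each
factor of the integrand and of the closed form is of this type, up to a factor independent of the
space variables. -/
noncomputable def damp (c t : ℝ) : ℝ := t / (1 + c * t)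

section Damp

variable {c s t K a d p v : ℝ}

lemma damp_nonneg (hc : 0 ≤ c) (ht : 0 ≤ t) : 0 ≤ damp c t := by
  unfold damp; positivity

lemma damp_le_self (hc : 0 ≤ c) (ht : 0 ≤ t) : damp c t ≤ t :=
  div_le_self ht (le_add_of_nonneg_right (mul_nonneg hc ht))

lemma mul_damp_le_one (hc : 0 ≤ c) (ht : 0 ≤ t) : c * damp c t ≤ 1 := by
  rw [damp, ← mul_div_assoc, div_le_one (by positivity)]
  linarith

lemma le_one_add_mul_mul_damp (hc : 0 ≤ c) (hs : 0 ≤ s) (hst : s ≤ t) :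
    s ≤ (1 + c * s) * damp c t := by
  have ht : 0 ≤ t := hs.trans hst
  rw [damp, ← mul_div_assoc, le_div_iff₀ (by positivity)]
  linarith

lemma damp_le_mul_damp (hc : 0 ≤ c) (hK : 1 ≤ K) (hs : 0 ≤ s) (h : s ≤ K * t) :
    damp c s ≤ K * damp c t := by
  have ht : 0 ≤ t := nonneg_of_mul_nonneg_right (hs.trans h) (by positivity)
  rw [damp, damp, ← mul_div_assoc, div_le_div_iff₀ (by positivity) (by positivity)]
  calc s * (1 + c * t) = s + c * t * s := by ring
    _ ≤ K * t + K * (c * t * s) := add_le_add h (le_mul_of_one_le_left (by positivity) hK)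
    _ = K * t * (1 + c * s) := by ring

lemma damp_add_damp (ha : 0 ≤ a) (hd : 0 ≤ d) (hp : 0 ≤ p) (hv : 0 ≤ v) :
    damp v (a + damp p d) =
      (a + d + a * p * d) / (1 + p * d + v * (a + d + a * p * d)) := by
  unfold damp
  field_simp
  ring

-- In the next two lemmas the difference of the cross-multiplied sides is a polynomial with
-- nonnegative coefficients.
lemma damp_mul_damp_add_damp_le (ha : 0 ≤ a) (hd : 0 ≤ d) (hp : 0 ≤ p) (hv : 0 ≤ v) :
    damp (p + v) a * damp v (a + damp p d) ≤ damp (p + v) (a + d) * (2 * damp v a) := by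
  rw [damp_add_damp ha hd hp hv, damp, damp, damp, mul_left_comm _ 2, div_mul_div_comm,
    div_mul_div_comm, ← mul_div_assoc, div_le_div_iff₀ (by positivity) (by positivity),
    ← sub_nonneg]
  ring_nf
  positivity

lemma damp_add_mul_damp_le (ha : 0 ≤ a) (hd : 0 ≤ d) (hp : 0 ≤ p) (hv : 0 ≤ v) :
    damp (p + v) (a + d) * damp v a ≤ damp (p + v) a * (2 * damp v (a + damp p d)) := by
  rw [damp_add_damp ha hd hp hv, damp, damp, damp, mul_left_comm _ 2, div_mul_div_comm,
    div_mul_div_comm, ← mul_div_assoc, div_le_div_iff₀ (by positivity) (by positivity),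
    ← sub_nonneg]
  ring_nf
  positivity

lemma hasDerivAt_damp (h : 1 + c * t ≠ 0) : HasDerivAt (damp c) ((1 + c * t) ^ 2)⁻¹ t := by
  refine ((hasDerivAt_id t).div (((hasDerivAt_id t).const_mul c).const_add 1) h).congr_deriv ?_
  simp only [id]
  field_simp
  ring

lemma integral_Icc_inv_one_add_mul_sub_sq {a b : ℝ} (hab : a ≤ b) (hc : 0 ≤ c) :
    ∫ s in Set.Icc a b, ((1 + c * (b - s)) ^ 2)⁻¹ = damp c (b - a) := by
  have hne : ∀ t ∈ Set.uIcc 0 (b - a), 1 + c * t ≠ 0 := fun t ht => by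
    rw [Set.uIcc_of_le (sub_nonneg.2 hab)] at ht
    have := ht.1
    positivity
  rw [integral_Icc_eq_integral_Ioc, ← intervalIntegral.integral_of_le hab,
    intervalIntegral.integral_comp_sub_left (fun t => ((1 + c * t) ^ 2)⁻¹), sub_self,
    intervalIntegral.integral_eq_sub_of_hasDerivAt fun t ht => hasDerivAt_damp (hne t ht)]
  · simp [damp]
  · exact (ContinuousOn.inv₀ (by fun_prop) fun t ht =>
      pow_ne_zero 2 (hne t ht)).intervalIntegrable

end Damp

lemma exp_neg_mul_one_add_pow_le (n : ℕ) {t : ℝ} (ht : 0 ≤ t) :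
    Real.exp (-t) * (1 + t) ^ n ≤ (n + 2).factorial * Real.exp 1 * ((1 + t) ^ 2)⁻¹ := by
  have h := Real.pow_div_factorial_le_exp (x := 1 + t) (by positivity) (n + 2)
  rw [div_le_iff₀ (by positivity), Real.exp_add] at h
  rw [← div_eq_mul_inv, le_div_iff₀ (by positivity), Real.exp_neg, inv_mul_eq_div,
    div_mul_eq_mul_div, div_le_iff₀ (Real.exp_pos t), ← pow_add]
  linarith

section FinProd

variable {n : ℕ}

lemma prod_Ioi_castSucc {M : Type*} [CommMonoid M] (f : Fin (n + 1) → M) (i : Fin n) :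
    ∏ j ∈ Ioi i.castSucc, f j = (∏ j ∈ Ioi i, f j.castSucc) * f (Fin.last n) := by
  rw [← Finset.filter_lt_eq_Ioi, ← Finset.filter_lt_eq_Ioi, prod_filter, prod_filter,
    Fin.prod_univ_castSucc]
  simp [Fin.castSucc_lt_last]

lemma mul_prod_Ioi_le_last_mul_prod_Ioi {R : Type*} [CommSemiring R] [PartialOrder R]
    [IsOrderedRing R] {g : Fin (n + 1) → R} {F G : Fin n → R} {i : Fin n}
    (hF : ∀ j ∈ Ioi i, 0 ≤ F j) (hG : ∀ j ∈ Ioi i, 0 ≤ G j)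
    (h : ∀ j ∈ Ioi i, g j.castSucc * F j ≤ g j.succ * G j) :
    g i.succ * ∏ j ∈ Ioi i, F j ≤ g (Fin.last n) * ∏ j ∈ Ioi i, G j := by
  obtain _ | n := n
  · exact i.elim0
  induction i using Fin.reverseInduction with
  | last => simp [← Fin.top_eq_last]
  | cast i ih =>
    have hI : Ioi i.castSucc = insert i.succ (Ioi i.succ) := by
      rw [Ioi_insert]
      ext j
      simp [Fin.castSucc_lt_iff_succ_le]
    rw [hI] at hF hG h ⊢
    simp only [forall_mem_insert] at hF hG h
    rw [prod_insert (by simp), prod_insert (by simp)]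
    calc g i.castSucc.succ * (F i.succ * ∏ j ∈ Ioi i.succ, F j)
        = g i.succ.castSucc * F i.succ * ∏ j ∈ Ioi i.succ, F j := by
          rw [Fin.succ_castSucc, mul_assoc]
      _ ≤ g i.succ.succ * G i.succ * ∏ j ∈ Ioi i.succ, F j :=
          mul_le_mul_of_nonneg_right h.1 (prod_nonneg hF.2)
      _ = G i.succ * (g i.succ.succ * ∏ j ∈ Ioi i.succ, F j) := by ring
      _ ≤ G i.succ * (g (Fin.last _) * ∏ j ∈ Ioi i.succ, G j) :=
          mul_le_mul_of_nonneg_left (ih hF.2 hG.2 h.2) hG.1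
      _ = g (Fin.last _) * (G i.succ * ∏ j ∈ Ioi i.succ, G j) := mul_left_comm _ _ _

lemma mul_prod_Ioi_comparison {R : Type*} [CommRing R] [PartialOrder R] [IsOrderedRing R]
    {g : Fin (n + 1) → R} {F G : Fin n → R} {C : R} (hC : 0 ≤ C) {i : Fin n}
    (hF : ∀ j ∈ Ioi i, 0 ≤ F j) (hG : ∀ j ∈ Ioi i, 0 ≤ G j)
    (hFG : ∀ j ∈ Ioi i, g j.castSucc * F j ≤ g j.succ * (C * G j))
    (hGF : ∀ j ∈ Ioi i, g j.succ * G j ≤ g j.castSucc * (C * F j)) :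
    g i.succ * ∏ j ∈ Ioi i, F j ≤ C ^ #(Ioi i) * (g (Fin.last n) * ∏ j ∈ Ioi i, G j) ∧
      g (Fin.last n) * ∏ j ∈ Ioi i, G j ≤ C ^ #(Ioi i) * (g i.succ * ∏ j ∈ Ioi i, F j) := by
  rw [mul_left_comm, mul_left_comm (C ^ _), ← prod_const, ← prod_mul_distrib,
    ← prod_mul_distrib]
  refine ⟨mul_prod_Ioi_le_last_mul_prod_Ioi hF (fun j hj => mul_nonneg hC (hG j hj)) hFG, ?_⟩
  have h := mul_prod_Ioi_le_last_mul_prod_Ioi (g := -g) (fun j hj => mul_nonneg hC (hF j hj)) hG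
    fun j hj => by simpa using hGF j hj
  simpa using h

end FinProd

section Box

variable {ι : Type*} {μ a b y : ι → ℝ}

lemma sub_nonneg_of_mem_Icc {i j : ι} (hji : b j ≤ a i) (hy : y ∈ Set.Icc a b) : 0 ≤ y i - y j :=
  sub_nonneg.2 ((hy.2 j).trans (hji.trans (hy.1 i)))

lemma sub_add_damp_nonneg (hμ : 0 ≤ μ) (hab : a ≤ b) {i j : ι} (hji : b j ≤ a i) :
    0 ≤ b i - b j + damp (μ j) (b j - a j) :=
  add_nonneg (sub_nonneg.2 (hji.trans (hab i))) (damp_nonneg (hμ j) (sub_nonneg.2 (hab j)))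

/-- A box in which each `y k` stays at a distance from `b k` comparable with the length
`damp (μ k) (b k - a k)` of the window of Laplace's method. -/
def laplaceWindow (μ a b : ι → ℝ) : Set (ι → ℝ) :=
  Set.Icc (fun k => b k - damp (μ k) (b k - a k) / 2) fun k => b k - damp (μ k) (b k - a k) / 4

lemma laplaceWindow_subset (hμ : 0 ≤ μ) (hab : a ≤ b) : laplaceWindow μ a b ⊆ Set.Icc a b := by
  have hm (k : ι) := damp_nonneg (hμ k) (sub_nonneg.2 (hab k))
  refine Set.Icc_subset_Icc (fun k => ?_) fun k => ?_
  · linarith [hm k, damp_le_self (hμ k) (sub_nonneg.2 (hab k))]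
  · linarith [hm k]

variable [Fintype ι]

lemma volume_laplaceWindow (hμ : 0 ≤ μ) (hab : a ≤ b) :
    volume.real (laplaceWindow μ a b) =
      (1 / 4) ^ Fintype.card ι * ∏ k, damp (μ k) (b k - a k) := by
  rw [← card_univ, ← prod_const, ← prod_mul_distrib, laplaceWindow, measureReal_def,
    Real.volume_Icc_pi_toReal fun k => by
      linarith [damp_nonneg (hμ k) (sub_nonneg.2 (hab k))]]
  exact prod_congr rfl fun k _ => by ring

lemma exp_neg_card_le_of_mem_laplaceWindow (hμ : 0 ≤ μ) (hab : a ≤ b)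
    (hy : y ∈ laplaceWindow μ a b) :
    Real.exp (-Fintype.card ι) ≤ Real.exp (-∑ k, μ k * (b k - y k)) := by
  refine Real.exp_le_exp.2 (neg_le_neg ?_)
  calc ∑ k, μ k * (b k - y k) ≤ ∑ _k : ι, (1 : ℝ) := by
        refine sum_le_sum fun k _ => ?_
        have hab' := sub_nonneg.2 (hab k)
        refine le_trans (mul_le_mul_of_nonneg_left ?_ (hμ k)) (mul_damp_le_one (hμ k) hab')
        linarith [hy.1 k, damp_nonneg (hμ k) hab']
    _ = Fintype.card ι := by simp

lemma integral_prod_inv_one_add_mul_sub_sq (hμ : 0 ≤ μ) (hab : a ≤ b) :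
    ∫ y in Set.Icc a b, ∏ k, ((1 + μ k * (b k - y k)) ^ 2)⁻¹ =
      ∏ k, damp (μ k) (b k - a k) := by
  rw [← Set.pi_univ_Icc, volume_pi, Measure.restrict_pi_pi,
    integral_fintype_prod_eq_prod fun k s => ((1 + μ k * (b k - s)) ^ 2)⁻¹]
  exact prod_congr rfl fun k _ => integral_Icc_inv_one_add_mul_sub_sq (hab k) (hμ k)

lemma integrableOn_prod_inv_one_add_mul_sub_sq (hμ : 0 ≤ μ) :
    IntegrableOn (fun y : ι → ℝ => ∏ k, ((1 + μ k * (b k - y k)) ^ 2)⁻¹) (Set.Icc a b) := by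
  refine ContinuousOn.integrableOn_compact isCompact_Icc ?_
  refine continuousOn_finsetProd _ fun k _ => .inv₀ (by fun_prop) fun y hy => ?_
  have := mul_nonneg (hμ k) (sub_nonneg.2 (hy.2 k))
  positivity

end Box

section Laplace

variable {ι : Type*} [LinearOrder ι] [LocallyFiniteOrderTop ι] {lam μ a b y c : ι → ℝ}
  {w w' : ι → ι → ℝ}

/-- The contribution of the variable with index `i` to `laplaceSize`. -/
noncomputable def laplaceFactor (lam μ a b : ι → ℝ) (i : ι) : ℝ :=
  damp (μ i) (b i - a i) *
    ∏ j ∈ Ioi i, damp (lam i - lam j) (b i - b j + damp (μ j) (b j - a j))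

lemma laplaceFactor_nonneg (hlam : Antitone lam) (hμ : 0 ≤ μ) (hab : a ≤ b)
    (hstack : ∀ i j, i < j → b j ≤ a i) (i : ι) : 0 ≤ laplaceFactor lam μ a b i :=
  mul_nonneg (damp_nonneg (hμ i) (sub_nonneg.2 (hab i))) (prod_nonneg fun j hj =>
    damp_nonneg (sub_nonneg.2 (hlam (mem_Ioi.1 hj).le))
      (sub_add_damp_nonneg hμ hab (hstack i j (mem_Ioi.1 hj))))

variable [Fintype ι]

/-- The product of `damp (lam i - lam j) (w i j)` over all pairs `i < j`. The weight `w i j` stands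
for a difference `y i - y j` or for an approximation of one. -/
noncomputable def dampProd (lam : ι → ℝ) (w : ι → ι → ℝ) : ℝ :=
  ∏ i, ∏ j ∈ Ioi i, damp (lam i - lam j) (w i j)

/-- The integrand of `Iint` without the factors independent of `y`. Here `lam` is the restriction of
the frequency vector to the first `n` indices, `μ k` stands for `λ_k - λ_{n+1}` and `b k` for the
upper end `x_k` of the range of `y k`. -/
noncomputable def laplaceIntegrand (lam μ b y : ι → ℝ) : ℝ :=
  Real.exp (-∑ k, μ k * (b k - y k)) * dampProd lam fun i j => y i - y j

/-- The size, predicted by Laplace's method, of the integral of `laplaceIntegrand lam μ b` over the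
box `Icc a b`: the exponential confines `y k` to a window of length `damp (μ k) (b k - a k)` below
`b k`, where `y i - y j` is comparable with `b i - b j + damp (μ j) (b j - a j)`. -/
noncomputable def laplaceSize (lam μ a b : ι → ℝ) : ℝ := ∏ i, laplaceFactor lam μ a b i

lemma laplaceSize_eq (lam μ a b : ι → ℝ) :
    laplaceSize lam μ a b = (∏ k, damp (μ k) (b k - a k)) *
      dampProd lam fun i j => b i - b j + damp (μ j) (b j - a j) :=
  prod_mul_distrib

lemma dampProd_nonneg (hlam : Antitone lam) (hw : ∀ i j, i < j → 0 ≤ w i j) :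
    0 ≤ dampProd lam w :=
  prod_nonneg fun i _ => prod_nonneg fun j hj =>
    damp_nonneg (sub_nonneg.2 (hlam (mem_Ioi.1 hj).le)) (hw i j (mem_Ioi.1 hj))

lemma dampProd_le_mul_dampProd (hlam : Antitone lam) (hc : ∀ j, 1 ≤ c j)
    (hw : ∀ i j, i < j → 0 ≤ w i j) (h : ∀ i j, i < j → w i j ≤ c j * w' i j) :
    dampProd lam w ≤ (∏ j, c j) ^ Fintype.card ι * dampProd lam w' := by
  have hlam' {i j : ι} (hj : j ∈ Ioi i) : 0 ≤ lam i - lam j :=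
    sub_nonneg.2 (hlam (mem_Ioi.1 hj).le)
  have hterm (i j : ι) (hj : j ∈ Ioi i) : 0 ≤ damp (lam i - lam j) (w i j) :=
    damp_nonneg (hlam' hj) (hw i j (mem_Ioi.1 hj))
  have hterm' (i j : ι) (hj : j ∈ Ioi i) : 0 ≤ damp (lam i - lam j) (w' i j) :=
    damp_nonneg (hlam' hj) (nonneg_of_mul_nonneg_right ((hw i j (mem_Ioi.1 hj)).trans
      (h i j (mem_Ioi.1 hj))) (zero_lt_one.trans_le (hc j)))
  rw [← card_univ, ← prod_const, dampProd, dampProd, ← prod_mul_distrib]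
  refine prod_le_prod (fun i _ => prod_nonneg (hterm i)) fun i _ => ?_
  calc ∏ j ∈ Ioi i, damp (lam i - lam j) (w i j)
      ≤ ∏ j ∈ Ioi i, c j * damp (lam i - lam j) (w' i j) :=
        prod_le_prod (hterm i) fun j hj => damp_le_mul_damp (hlam' hj) (hc j)
          (hw i j (mem_Ioi.1 hj)) (h i j (mem_Ioi.1 hj))
    _ = (∏ j ∈ Ioi i, c j) * ∏ j ∈ Ioi i, damp (lam i - lam j) (w' i j) := prod_mul_distrib
    _ ≤ (∏ j, c j) * ∏ j ∈ Ioi i, damp (lam i - lam j) (w' i j) := by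
        refine mul_le_mul_of_nonneg_right ?_ (prod_nonneg (hterm' i))
        exact prod_le_prod_of_subset_of_one_le (subset_univ _)
          (fun j _ => zero_le_one.trans (hc j)) fun j _ _ => hc j

lemma laplaceIntegrand_nonneg (hlam : Antitone lam) (hstack : ∀ i j, i < j → b j ≤ a i)
    (hy : y ∈ Set.Icc a b) : 0 ≤ laplaceIntegrand lam μ b y :=
  mul_nonneg (Real.exp_nonneg _)
    (dampProd_nonneg hlam fun i j hij => sub_nonneg_of_mem_Icc (hstack i j hij) hy)

lemma integrableOn_laplaceIntegrand (hlam : Antitone lam)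
    (hstack : ∀ i j, i < j → b j ≤ a i) :
    IntegrableOn (laplaceIntegrand lam μ b) (Set.Icc a b) := by
  refine ContinuousOn.integrableOn_compact isCompact_Icc (.mul (by fun_prop) ?_)
  refine continuousOn_finsetProd _ fun i _ => continuousOn_finsetProd _ fun j hj => ?_
  refine .div (by fun_prop) (by fun_prop) fun y hy => ?_
  have := sub_nonneg_of_mem_Icc (hstack i j (mem_Ioi.1 hj)) hy
  have := sub_nonneg.2 (hlam (mem_Ioi.1 hj).le)
  positivity

lemma dampProd_le_of_mem_laplaceWindow (hlam : Antitone lam) (hμ : 0 ≤ μ) (hab : a ≤ b)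
    (hstack : ∀ i j, i < j → b j ≤ a i) (hy : y ∈ laplaceWindow μ a b) :
    dampProd lam (fun i j => b i - b j + damp (μ j) (b j - a j)) ≤
      (4 ^ Fintype.card ι) ^ Fintype.card ι * dampProd lam fun i j => y i - y j := by
  have hconst : (4 : ℝ) ^ Fintype.card ι = ∏ _j : ι, 4 := by simp
  rw [hconst]
  refine dampProd_le_mul_dampProd hlam (fun _ => by norm_num)
    (fun i j hij => sub_add_damp_nonneg hμ hab (hstack i j hij)) fun i j hij => ?_
  linarith [hy.1 i, hy.2 j, hab i, hstack i j hij, damp_le_self (hμ i) (sub_nonneg.2 (hab i))]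

theorem laplaceSize_le_integral (hlam : Antitone lam) (hμ : 0 ≤ μ) (hab : a ≤ b)
    (hstack : ∀ i j, i < j → b j ≤ a i) :
    laplaceSize lam μ a b ≤
      Real.exp (Fintype.card ι) * (4 ^ Fintype.card ι) ^ (Fintype.card ι + 1) *
        ∫ y in Set.Icc a b, laplaceIntegrand lam μ b y := by
  set N := Fintype.card ι
  set Q := dampProd lam fun i j => b i - b j + damp (μ j) (b j - a j)
  have hle : ∀ y ∈ laplaceWindow μ a b,
      Real.exp (-N) * (((4 ^ N) ^ N)⁻¹ * Q) ≤ laplaceIntegrand lam μ b y := fun y hy =>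
    mul_le_mul (exp_neg_card_le_of_mem_laplaceWindow hμ hab hy)
      ((inv_mul_le_iff₀ (by positivity)).2
        (dampProd_le_of_mem_laplaceWindow hlam hμ hab hstack hy))
      (mul_nonneg (by positivity)
        (dampProd_nonneg hlam fun i j hij => sub_add_damp_nonneg hμ hab (hstack i j hij)))
      (Real.exp_nonneg _)
  have hint := integrableOn_laplaceIntegrand (μ := μ) hlam hstack
  have hsub := laplaceWindow_subset hμ hab
  calc laplaceSize lam μ a b
      = Real.exp N * (4 ^ N) ^ (N + 1) *
          (Real.exp (-N) * (((4 ^ N) ^ N)⁻¹ * Q) * volume.real (laplaceWindow μ a b)) := by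
        rw [laplaceSize_eq, volume_laplaceWindow hμ hab, Real.exp_neg, one_div, inv_pow, pow_succ]
        simp only [Q, N]
        field_simp
    _ ≤ Real.exp N * (4 ^ N) ^ (N + 1) *
          ∫ y in laplaceWindow μ a b, laplaceIntegrand lam μ b y := by
        gcongr
        exact setIntegral_ge_of_const_le_real measurableSet_Icc isCompact_Icc.measure_ne_top hle
          (hint.mono_set hsub)
    _ ≤ Real.exp N * (4 ^ N) ^ (N + 1) * ∫ y in Set.Icc a b, laplaceIntegrand lam μ b y := by
        refine mul_le_mul_of_nonneg_left ?_ (by positivity)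
        exact setIntegral_mono_set hint ((ae_restrict_iff' measurableSet_Icc).2
          (ae_of_all _ fun y hy => laplaceIntegrand_nonneg hlam hstack hy)) hsub.eventuallyLE

lemma dampProd_sub_le (hlam : Antitone lam) (hμ : 0 ≤ μ)
    (hstack : ∀ i j, i < j → b j ≤ a i) (hy : y ∈ Set.Icc a b) :
    dampProd lam (fun i j => y i - y j) ≤
      (∏ k, (1 + μ k * (b k - y k))) ^ Fintype.card ι *
        dampProd lam fun i j => b i - b j + damp (μ j) (b j - a j) := by
  have ht (k : ι) : 0 ≤ μ k * (b k - y k) := mul_nonneg (hμ k) (sub_nonneg.2 (hy.2 k))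
  refine dampProd_le_mul_dampProd hlam (fun k => le_add_of_nonneg_right (ht k))
    (fun i j hij => sub_nonneg_of_mem_Icc (hstack i j hij) hy) fun i j hij => ?_
  have hb : 0 ≤ b i - b j := by linarith [hstack i j hij, hy.1 i, hy.2 i]
  have hyj : b j - y j ≤ (1 + μ j * (b j - y j)) * damp (μ j) (b j - a j) :=
    le_one_add_mul_mul_damp (hμ j) (sub_nonneg.2 (hy.2 j)) (sub_le_sub_left (hy.1 j) _)
  calc y i - y j ≤ (b i - b j) + (b j - y j) := by linarith [hy.2 i]
    _ ≤ (1 + μ j * (b j - y j)) * (b i - b j) +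
          (1 + μ j * (b j - y j)) * damp (μ j) (b j - a j) :=
        add_le_add (le_mul_of_one_le_left hb (le_add_of_nonneg_right (ht j))) hyj
    _ = _ := (mul_add _ _ _).symm

lemma laplaceIntegrand_le (hlam : Antitone lam) (hμ : 0 ≤ μ) (hab : a ≤ b)
    (hstack : ∀ i j, i < j → b j ≤ a i) (hy : y ∈ Set.Icc a b) :
    laplaceIntegrand lam μ b y ≤
      ((Fintype.card ι + 2).factorial * Real.exp 1) ^ Fintype.card ι *
        (dampProd lam fun i j => b i - b j + damp (μ j) (b j - a j)) *
        ∏ k, ((1 + μ k * (b k - y k)) ^ 2)⁻¹ := by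
  set N := Fintype.card ι
  set Q := dampProd lam fun i j => b i - b j + damp (μ j) (b j - a j)
  have hQ : 0 ≤ Q := dampProd_nonneg hlam fun i j hij => sub_add_damp_nonneg hμ hab (hstack i j hij)
  have ht (k : ι) : 0 ≤ μ k * (b k - y k) := mul_nonneg (hμ k) (sub_nonneg.2 (hy.2 k))
  calc laplaceIntegrand lam μ b y
      ≤ Real.exp (-∑ k, μ k * (b k - y k)) * ((∏ k, (1 + μ k * (b k - y k))) ^ N * Q) :=
        mul_le_mul_of_nonneg_left (dampProd_sub_le hlam hμ hstack hy) (Real.exp_nonneg _)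
    _ = (∏ k, Real.exp (-(μ k * (b k - y k))) * (1 + μ k * (b k - y k)) ^ N) * Q := by
        rw [← sum_neg_distrib, Real.exp_sum, prod_mul_distrib, prod_pow, mul_assoc]
    _ ≤ (∏ k, (N + 2).factorial * Real.exp 1 * ((1 + μ k * (b k - y k)) ^ 2)⁻¹) * Q := by
        refine mul_le_mul_of_nonneg_right (prod_le_prod (fun k _ => ?_) fun k _ =>
          exp_neg_mul_one_add_pow_le N (ht k)) hQ
        have := ht k
        positivity
    _ = ((N + 2).factorial * Real.exp 1) ^ N * Q * ∏ k, ((1 + μ k * (b k - y k)) ^ 2)⁻¹ := by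
        rw [prod_mul_distrib, prod_const, card_univ]
        ring

theorem integral_le_laplaceSize (hlam : Antitone lam) (hμ : 0 ≤ μ) (hab : a ≤ b)
    (hstack : ∀ i j, i < j → b j ≤ a i) :
    ∫ y in Set.Icc a b, laplaceIntegrand lam μ b y ≤
      ((Fintype.card ι + 2).factorial * Real.exp 1) ^ Fintype.card ι *
        laplaceSize lam μ a b := by
  refine (setIntegral_mono_on (integrableOn_laplaceIntegrand hlam hstack)
    ((integrableOn_prod_inv_one_add_mul_sub_sq hμ).const_mul _) measurableSet_Icc
    fun y hy => laplaceIntegrand_le hlam hμ hab hstack hy).trans_eq ?_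
  rw [integral_const_mul, integral_prod_inv_one_add_mul_sub_sq hμ hab, laplaceSize_eq]
  ring

end Laplace

section Telescoping

variable {n : ℕ} {lam x : Fin (n + 1) → ℝ}

/-- The rate `λ_k - λ_{n+1}` of the exponential decay of the integrand in the variable `y k`. -/
def decayRate (lam : Fin (n + 1) → ℝ) (k : Fin n) : ℝ := lam k.castSucc - lam (Fin.last n)

lemma decayRate_nonneg (hlam : Antitone lam) : 0 ≤ decayRate lam :=
  fun _ => sub_nonneg.2 (hlam (Fin.le_last _))

lemma antitone_init (hx : Antitone x) : Antitone (Fin.init x) :=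
  fun _ _ h => hx (Fin.castSucc_le_castSucc_iff.2 h)

lemma tail_le_init (hx : Antitone x) : Fin.tail x ≤ Fin.init x :=
  fun k => hx k.castSucc_lt_succ.le

lemma init_le_tail (hx : Antitone x) (i j : Fin n) (hij : i < j) : Fin.init x j ≤ Fin.tail x i :=
  hx (Fin.succ_le_castSucc_iff.2 hij)

lemma dampProd_sub_eq_prod_castSucc (lam x : Fin (n + 1) → ℝ) :
    (dampProd lam fun i j => x i - x j) =
      ∏ i : Fin n, ∏ j ∈ Ioi i.castSucc,
        damp (lam i.castSucc - lam j) (x i.castSucc - x j) := by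
  rw [dampProd, Fin.prod_univ_castSucc]
  simp [← Fin.top_eq_last]

lemma laplaceFactor_comparison (hlam : Antitone lam) (hx : Antitone x) (i : Fin n) :
    laplaceFactor (Fin.init lam) (decayRate lam) (Fin.tail x) (Fin.init x) i ≤
        2 ^ #(Ioi i) *
          ∏ j ∈ Ioi i.castSucc, damp (lam i.castSucc - lam j) (x i.castSucc - x j) ∧
      ∏ j ∈ Ioi i.castSucc, damp (lam i.castSucc - lam j) (x i.castSucc - x j) ≤
        2 ^ #(Ioi i) *
          laplaceFactor (Fin.init lam) (decayRate lam) (Fin.tail x) (Fin.init x) i := by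
  have hv : ∀ j ∈ Ioi i, 0 ≤ lam i.castSucc - lam j.castSucc :=
    fun j hj => sub_nonneg.2 (antitone_init hlam (mem_Ioi.1 hj).le)
  have ha : ∀ j ∈ Ioi i, 0 ≤ x i.castSucc - x j.castSucc :=
    fun j hj => sub_nonneg.2 (antitone_init hx (mem_Ioi.1 hj).le)
  have hp := decayRate_nonneg hlam
  have hd (j : Fin n) : 0 ≤ x j.castSucc - x j.succ := sub_nonneg.2 (tail_le_init hx j)
  have hrate (j : Fin n) :
      decayRate lam i = decayRate lam j + (lam i.castSucc - lam j.castSucc) :=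
    (sub_add_sub_cancel' _ _ _).symm
  have hgap (j : Fin n) :
      x i.castSucc - x j.succ = (x i.castSucc - x j.castSucc) + (x j.castSucc - x j.succ) :=
    (sub_add_sub_cancel _ _ _).symm
  rw [prod_Ioi_castSucc, mul_comm (∏ j ∈ Ioi i, _)]
  refine mul_prod_Ioi_comparison (g := fun k => damp (decayRate lam i) (x i.castSucc - x k))
    zero_le_two (fun j hj => ?_) (fun j hj => ?_) (fun j hj => ?_) fun j hj => ?_
  · exact damp_nonneg (hv j hj) (add_nonneg (ha j hj) (damp_nonneg (hp j) (hd j)))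
  · exact damp_nonneg (hv j hj) (ha j hj)
  · rw [hrate j, hgap j]
    exact damp_mul_damp_add_damp_le (ha j hj) (hd j) (hp j) (hv j hj)
  · rw [hrate j, hgap j]
    exact damp_add_mul_damp_le (ha j hj) (hd j) (hp j) (hv j hj)

theorem laplaceSize_comparison (hlam : Antitone lam) (hx : Antitone x) :
    laplaceSize (Fin.init lam) (decayRate lam) (Fin.tail x) (Fin.init x) ≤
        (∏ i : Fin n, 2 ^ #(Ioi i)) * dampProd lam (fun i j => x i - x j) ∧
      dampProd lam (fun i j => x i - x j) ≤ (∏ i : Fin n, 2 ^ #(Ioi i)) *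
        laplaceSize (Fin.init lam) (decayRate lam) (Fin.tail x) (Fin.init x) := by
  rw [dampProd_sub_eq_prod_castSucc, laplaceSize, ← prod_mul_distrib, ← prod_mul_distrib]
  exact ⟨prod_le_prod (fun i _ => laplaceFactor_nonneg (antitone_init hlam)
      (decayRate_nonneg hlam) (tail_le_init hx) (init_le_tail hx) i)
      fun i _ => (laplaceFactor_comparison hlam hx i).1,
    prod_le_prod (fun i _ => prod_nonneg fun j hj => damp_nonneg
      (sub_nonneg.2 (hlam (mem_Ioi.1 hj).le)) (sub_nonneg.2 (hx (mem_Ioi.1 hj).le)))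
      fun i _ => (laplaceFactor_comparison hlam hx i).2⟩

end Telescoping

lemma Iint_eq_mul_integral (n : ℕ) (lam x : Fin (n + 1) → ℝ) :
    Iint n lam x = (∏ i : Fin n, ∏ j ∈ Ioi i, (lam i.castSucc - lam j.castSucc)) *
      ∫ y in Set.Icc (Fin.tail x) (Fin.init x),
        laplaceIntegrand (Fin.init lam) (decayRate lam) (Fin.init x) y := by
  rw [← integral_const_mul]
  refine integral_congr_ae (ae_of_all _ fun y => ?_)
  simp only [laplaceIntegrand, dampProd, mul_left_comm (∏ _i : Fin n, _), ← prod_mul_distrib]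
  congr 1
  refine prod_congr rfl fun i _ => prod_congr rfl fun j _ => ?_
  rw [damp, Fin.init, Fin.init, mul_comm (y i - y j), mul_div_assoc]

lemma closed_form_eq_mul_dampProd (n : ℕ) (lam x : Fin (n + 1) → ℝ) :
    (∏ i : Fin (n + 1), ∏ j ∈ Ioi i, (x i - x j)) *
          (∏ i : Fin n, ∏ j ∈ Ioi i, (lam i.castSucc - lam j.castSucc)) /
        ∏ i : Fin (n + 1), ∏ j ∈ Ioi i, (1 + (lam i - lam j) * (x i - x j)) =
      (∏ i : Fin n, ∏ j ∈ Ioi i, (lam i.castSucc - lam j.castSucc)) *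
        dampProd lam fun i j => x i - x j := by
  simp only [dampProd, damp, prod_div_distrib]
  rw [mul_comm, mul_div_assoc]

/-- Sharp estimate of `I⁽ⁿ⁾`: for weakly decreasing `λ, x ∈ ℝ^{n+1}`,
`I⁽ⁿ⁾(λ;x) ≍ [∏_{i<j≤n+1}(x_i−x_j) · ∏_{i<j≤n}(λ_i−λ_j)] / ∏_{i<j≤n+1}(1+(λ_i−λ_j)(x_i−x_j))`,
with constants depending only on `n`. -/
theorem Iint_estimate (n : ℕ) (hn : 1 ≤ n) :
    ∃ C₁ C₂ : ℝ, 0 < C₁ ∧ 0 < C₂ ∧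
      ∀ lam x : Fin (n + 1) → ℝ, Antitone lam → Antitone x →
        C₁ * ((∏ i : Fin (n + 1), ∏ j ∈ Finset.Ioi i, (x i - x j)) *
              (∏ i : Fin n, ∏ j ∈ Finset.Ioi i, (lam i.castSucc - lam j.castSucc)) /
              ∏ i : Fin (n + 1), ∏ j ∈ Finset.Ioi i, (1 + (lam i - lam j) * (x i - x j))) ≤
            Iint n lam x ∧
        Iint n lam x ≤
          C₂ * ((∏ i : Fin (n + 1), ∏ j ∈ Finset.Ioi i, (x i - x j)) *
              (∏ i : Fin n, ∏ j ∈ Finset.Ioi i, (lam i.castSucc - lam j.castSucc)) /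
              ∏ i : Fin (n + 1), ∏ j ∈ Finset.Ioi i, (1 + (lam i - lam j) * (x i - x j))) := by
  set A : ℝ := Real.exp n * (4 ^ n) ^ (n + 1)
  set B : ℝ := ((n + 2).factorial * Real.exp 1) ^ n
  set K : ℝ := ∏ i : Fin n, (2 : ℝ) ^ #(Ioi i)
  refine ⟨(K * A)⁻¹, B * K, by positivity, by positivity, fun lam x hlam hx => ?_⟩
  have hlam' := antitone_init hlam
  have hV : 0 ≤ ∏ i : Fin n, ∏ j ∈ Ioi i, (lam i.castSucc - lam j.castSucc) :=
    prod_nonneg fun i _ => prod_nonneg fun j hj => sub_nonneg.2 (hlam' (mem_Ioi.1 hj).le)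
  have hlower := laplaceSize_le_integral hlam' (decayRate_nonneg hlam) (tail_le_init hx)
    (init_le_tail hx)
  have hupper := integral_le_laplaceSize hlam' (decayRate_nonneg hlam) (tail_le_init hx)
    (init_le_tail hx)
  rw [Fintype.card_fin] at hlower hupper
  obtain ⟨hsize_le, hle_size⟩ := laplaceSize_comparison hlam hx
  rw [closed_form_eq_mul_dampProd, Iint_eq_mul_integral, mul_left_comm, mul_left_comm (B * K)]
  refine ⟨mul_le_mul_of_nonneg_left ?_ hV, mul_le_mul_of_nonneg_left ?_ hV⟩
  · rw [inv_mul_le_iff₀ (by positivity), mul_assoc]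
    exact hle_size.trans (mul_le_mul_of_nonneg_left hlower (by positivity))
  · rw [mul_assoc]
    exact hupper.trans (mul_le_mul_of_nonneg_left hsize_le (by positivity))
end

section
/- Let λ_1 ≥ λ_2 and x_1 ≥ x_2 be real numbers and set u = (λ_1−λ_2)(x_1−x_2). Then (u/(1+u))·e^{λ_1x_1+λ_2x_2} ≤ e^{λ_1x_1+λ_2x_2} − e^{λ_2x_1+λ_1x_2} ≤ (2u/(1+u))·e^{λ_1x_1+λ_2x_2}. (This is the sharp two-sided estimate of the spherical function in the rank-one case A_1: ψ_λ(x) ≍ e^{λ_1x_1+λ_2x_2}/(1+(λ_1−λ_2)(x_1−x_2)).) -/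
/-!
Dividing by the larger exponential `e^a` turns the difference `e^a - e^b` into `1 - e^{-u}` with
`u = a - b`. The lower bound is then `1 + u ≤ e^u`. For the upper bound, `1 - e^{-u}` is at most
`1` and at most `u`, hence at most their harmonic mean `2u / (1 + u)`.
-/

theorem min_le_two_mul_mul_div_add {K : Type*} [Field K] [LinearOrder K] [IsStrictOrderedRing K]
    {a b : K} (ha : 0 < a) (hb : 0 ≤ b) : min a b ≤ 2 * (a * b) / (a + b) := by
  rw [le_div_iff₀ (add_pos_of_pos_of_nonneg ha hb)]
  calc min a b * (a + b) = min a b * b + a * min a b := by ring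
    _ ≤ a * b + a * b := by
      gcongr
      exacts [min_le_left a b, min_le_right a b]
    _ = 2 * (a * b) := by ring

theorem div_one_add_le_one_sub_exp_neg {u : ℝ} (hu : -1 < u) :
    u / (1 + u) ≤ 1 - Real.exp (-u) := by
  have one_add_pos : 0 < 1 + u := by linarith
  calc u / (1 + u) = 1 - (1 + u)⁻¹ := by field_simp; ring
    _ ≤ 1 - (Real.exp u)⁻¹ := by
      gcongr
      linarith [Real.add_one_le_exp u]
    _ = 1 - Real.exp (-u) := by rw [Real.exp_neg]

theorem one_sub_exp_neg_le_min (u : ℝ) : 1 - Real.exp (-u) ≤ min 1 u :=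
  le_min (sub_le_self 1 (Real.exp_pos _).le) (by linarith [Real.one_sub_le_exp_neg u])

theorem one_sub_exp_neg_le_two_mul_div_one_add {u : ℝ} (hu : 0 ≤ u) :
    1 - Real.exp (-u) ≤ 2 * u / (1 + u) := by
  simpa only [one_mul] using
    (one_sub_exp_neg_le_min u).trans (min_le_two_mul_mul_div_add one_pos hu)

theorem exp_sub_exp_eq_one_sub_exp_neg_mul (a b : ℝ) :
    Real.exp a - Real.exp b = (1 - Real.exp (-(a - b))) * Real.exp a := by
  rw [sub_mul, one_mul, ← Real.exp_add, neg_sub, sub_add_cancel]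

theorem rank_one_estimate_general {a b : ℝ} (hab : b ≤ a) :
    (a - b) / (1 + (a - b)) * Real.exp a ≤ Real.exp a - Real.exp b ∧
      Real.exp a - Real.exp b ≤ 2 * (a - b) / (1 + (a - b)) * Real.exp a := by
  have gap_nonneg : 0 ≤ a - b := sub_nonneg.2 hab
  rw [exp_sub_exp_eq_one_sub_exp_neg_mul]
  constructor <;> gcongr
  · exact div_one_add_le_one_sub_exp_neg (by linarith)
  · exact one_sub_exp_neg_le_two_mul_div_one_add gap_nonneg

/-- Rank-one (`A₁`) sharp estimate: for `λ₁ ≥ λ₂`, `x₁ ≥ x₂` and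
`u = (λ₁−λ₂)(x₁−x₂)`, one has
`(u/(1+u))·e^{λ₁x₁+λ₂x₂} ≤ e^{λ₁x₁+λ₂x₂} − e^{λ₂x₁+λ₁x₂} ≤ (2u/(1+u))·e^{λ₁x₁+λ₂x₂}`. -/
theorem rank_one_estimate (l₁ l₂ x₁ x₂ : ℝ) (hl : l₂ ≤ l₁) (hx : x₂ ≤ x₁) :
    ((l₁ - l₂) * (x₁ - x₂) / (1 + (l₁ - l₂) * (x₁ - x₂))) * Real.exp (l₁ * x₁ + l₂ * x₂) ≤
      Real.exp (l₁ * x₁ + l₂ * x₂) - Real.exp (l₂ * x₁ + l₁ * x₂) ∧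
    Real.exp (l₁ * x₁ + l₂ * x₂) - Real.exp (l₂ * x₁ + l₁ * x₂) ≤
      (2 * ((l₁ - l₂) * (x₁ - x₂)) / (1 + (l₁ - l₂) * (x₁ - x₂))) *
        Real.exp (l₁ * x₁ + l₂ * x₂) := by
  have exponent_gap :
      (l₁ - l₂) * (x₁ - x₂) = l₁ * x₁ + l₂ * x₂ - (l₂ * x₁ + l₁ * x₂) := by ring
  rw [exponent_gap]
  exact rank_one_estimate_general
    (sub_nonneg.1 (exponent_gap ▸ mul_nonneg (sub_nonneg.2 hl) (sub_nonneg.2 hx)))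
end

section
/- (Iterative formula for spherical functions of type A in the complex case) Let n ≥ 2, let λ ∈ ℝⁿ be arbitrary, and let x ∈ ℝⁿ be weakly decreasing. Then ∑_{σ∈Sₙ} sgn(σ)·exp(∑_{k=1}^n λ_{σ(k)} x_k) = (∏_{i=1}^{n−1}(λ_i−λ_n)) · e^{λ_n·∑_{k=1}^n x_k} · ∫_{x_n}^{x_{n−1}} ⋯ ∫_{x_2}^{x_1} [∑_{τ∈S_{n−1}} sgn(τ)·exp(∑_{k=1}^{n−1} (λ_{τ(k)}−λ_n)·y_k)] dy_1 ⋯ dy_{n−1}, where the iterated integral is over y_k ∈ [x_{k+1}, x_k] for k = 1, …, n−1. -/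
/-!
Write the alternating sum as the determinant of `(e^{λ_i x_k})` and divide column `k` by
`e^{λ_n x_k}`, so that the last row becomes constant `1`. Subtracting neighbouring columns then
leaves a determinant of size `n - 1` whose entries are the increments of `t ↦ e^{(λ_i - λ_n) t}`
over `[x_{k+1}, x_k]`, that is, the integrals of its derivative. Every term of the Leibniz
expansion takes one entry from each column, so by Fubini a determinant of integrals, with one
variable per column, is the integral of the determinant. The factors `λ_i - λ_n` come out of the
rows.
-/

open Finset MeasureTheory

theorem det_eq_det_sub_succ_col_of_last_row_eq_one {R : Type*} [CommRing R] {n : ℕ}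
    (M : Matrix (Fin (n + 1)) (Fin (n + 1)) R) (hM : ∀ k, M (Fin.last n) k = 1) :
    M.det = (Matrix.of fun i k : Fin n =>
      M i.castSucc k.castSucc - M i.castSucc k.succ).det := by
  let D : Matrix (Fin n) (Fin n) R :=
    Matrix.of fun i k => M i.castSucc k.castSucc - M i.castSucc k.succ
  let B : Matrix (Fin (n + 1)) (Fin (n + 1)) R := Matrix.of fun i =>
    Fin.cons (M i 0) fun k : Fin n => M i k.succ - M i k.castSucc
  have last_row_head : B (Fin.last n) 0 = 1 := hM 0
  have last_row_tail (k : Fin n) : B (Fin.last n) k.succ = 0 := by simp [B, hM]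
  have minor_eq_neg : B.submatrix Fin.castSucc Fin.succ = -D := by
    ext i k
    simp [B, D]
  calc M.det = B.det :=
        Matrix.det_eq_of_forall_col_eq_smul_add_pred (fun _ => 1) (by simp [B]) (by simp [B])
    _ = (-1) ^ n * (-D).det := by
        simp [Matrix.det_succ_row B (Fin.last n), Fin.sum_univ_succ, last_row_head,
          last_row_tail, minor_eq_neg]
    _ = D.det := by
        rw [Matrix.det_neg, Fintype.card_fin, ← mul_assoc, ← mul_pow, neg_one_mul, neg_neg,
          one_pow, one_mul]

section IntegralDet

variable {𝕜 : Type*} [RCLike 𝕜]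

theorem integral_pi_det {ι : Type*} [Fintype ι] [DecidableEq ι] {E : ι → Type*}
    {mE : ∀ k, MeasurableSpace (E k)} {μ : ∀ k, Measure (E k)} [∀ k, SigmaFinite (μ k)]
    {g : ι → ∀ k, E k → 𝕜} (hg : ∀ i k, Integrable (g i k) (μ k)) :
    ∫ y, (Matrix.of fun i k => g i k (y k)).det ∂Measure.pi μ =
      (Matrix.of fun i k => ∫ t, g i k t ∂μ k).det := by
  have integrable_term (σ : Equiv.Perm ι) :
      Integrable (fun y => ∏ k, g (σ k) k (y k)) (Measure.pi μ) :=
    Integrable.fintype_prod_dep fun k => hg (σ k) k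
  simp only [Matrix.det_apply', Matrix.of_apply]
  rw [integral_finsetSum _ fun σ _ => (integrable_term σ).const_mul _]
  refine Finset.sum_congr rfl fun σ _ => ?_
  rw [integral_const_mul, integral_fintype_prod_eq_prod fun k => g (σ k) k]

theorem setIntegral_Icc_det {ι : Type*} [Fintype ι] [DecidableEq ι] {g : ι → ι → ℝ → 𝕜}
    {u v : ι → ℝ} (huv : u ≤ v)
    (hg : ∀ i k, IntervalIntegrable (g i k) volume (u k) (v k)) :
    ∫ y in Set.Icc u v, (Matrix.of fun i k => g i k (y k)).det =
      (Matrix.of fun i k => ∫ t in u k..v k, g i k t).det := by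
  have integrableOn_Icc (i k : ι) : IntegrableOn (g i k) (Set.Icc (u k) (v k)) :=
    (intervalIntegrable_iff_integrableOn_Icc_of_le (huv k)).1 (hg i k)
  have setIntegral_eq_intervalIntegral (i k : ι) :
      ∫ t in Set.Icc (u k) (v k), g i k t = ∫ t in u k..v k, g i k t := by
    rw [integral_Icc_eq_integral_Ioc, intervalIntegral.integral_of_le (huv k)]
  rw [← Set.pi_univ_Icc, volume_pi, Measure.restrict_pi_pi, integral_pi_det integrableOn_Icc]
  simp only [setIntegral_eq_intervalIntegral]

theorem det_eq_setIntegral_Icc_det_deriv {n : ℕ} {f : Fin (n + 1) → ℝ → 𝕜}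
    {f' : Fin n → ℝ → 𝕜} {x : Fin (n + 1) → ℝ} (hx : Antitone x)
    (hlast : ∀ k, f (Fin.last n) (x k) = 1)
    (hderiv : ∀ i t, HasDerivAt (f i.castSucc) (f' i t) t)
    (hint : ∀ i a b, IntervalIntegrable (f' i) volume a b) :
    (Matrix.of fun i k => f i (x k)).det =
      ∫ y in Set.Icc (fun k : Fin n => x k.succ) (fun k : Fin n => x k.castSucc),
        (Matrix.of fun i k => f' i (y k)).det := by
  have integral_deriv (i k : Fin n) :
      ∫ t in x k.succ..x k.castSucc, f' i t =
        f i.castSucc (x k.castSucc) - f i.castSucc (x k.succ) :=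
    intervalIntegral.integral_eq_sub_of_hasDerivAt (fun t _ => hderiv i t) (hint i _ _)
  rw [det_eq_det_sub_succ_col_of_last_row_eq_one _ hlast,
    setIntegral_Icc_det (fun k => hx k.castSucc_le_succ) fun i k => hint i _ _]
  simp only [integral_deriv, Matrix.of_apply]

end IntegralDet

section Exponentials

variable {ι : Type*} [Fintype ι] [DecidableEq ι]

theorem sum_sign_mul_cexp_eq_det (a x : ι → ℂ) :
    ∑ σ : Equiv.Perm ι, ((Equiv.Perm.sign σ : ℤ) : ℂ) * Complex.exp (∑ k, a (σ k) * x k) =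
      (Matrix.of fun i k => Complex.exp (a i * x k)).det := by
  simp only [Matrix.det_apply', Matrix.of_apply, Complex.exp_sum]

theorem det_cexp_eq_cexp_mul_det_cexp_sub (a x : ι → ℂ) (c : ℂ) :
    (Matrix.of fun i k => Complex.exp (a i * x k)).det =
      Complex.exp (c * ∑ k, x k) *
        (Matrix.of fun i k => Complex.exp ((a i - c) * x k)).det := by
  rw [Finset.mul_sum, Complex.exp_sum, ← Matrix.det_mul_row]
  congr! 4 with i k
  rw [Matrix.of_apply, ← Complex.exp_add]
  ring_nf

end Exponentials

theorem hasDerivAt_cexp_mul_ofReal (c : ℂ) (t : ℝ) :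
    HasDerivAt (fun s : ℝ => Complex.exp (c * s)) (c * Complex.exp (c * t)) t := by
  simpa [mul_comm] using ((hasDerivAt_id (t : ℂ)).const_mul c).cexp.comp_ofReal

theorem det_cexp_mul_eq_prod_mul_setIntegral_det {n : ℕ} {a : Fin (n + 1) → ℂ}
    {x : Fin (n + 1) → ℝ} (hx : Antitone x) (ha : a (Fin.last n) = 0) :
    (Matrix.of fun i k => Complex.exp (a i * x k)).det =
      (∏ i : Fin n, a i.castSucc) *
        ∫ y in Set.Icc (fun k : Fin n => x k.succ) (fun k : Fin n => x k.castSucc),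
          (Matrix.of fun i k => Complex.exp (a i.castSucc * y k)).det := by
  have intervalIntegrable_deriv (i : Fin n) (s t : ℝ) :
      IntervalIntegrable (fun t : ℝ => a i.castSucc * Complex.exp (a i.castSucc * t)) volume s t :=
    Continuous.intervalIntegrable (by fun_prop) s t
  have factor_rows (y : Fin n → ℝ) :
      (Matrix.of fun i k => a i.castSucc * Complex.exp (a i.castSucc * y k)).det =
        (∏ i : Fin n, a i.castSucc) *
          (Matrix.of fun i k => Complex.exp (a i.castSucc * y k)).det :=
    Matrix.det_mul_column _ (Matrix.of fun i k => Complex.exp (a i.castSucc * y k))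
  rw [det_eq_setIntegral_Icc_det_deriv (f := fun i t => Complex.exp (a i * t)) hx (by simp [ha])
    (fun i => hasDerivAt_cexp_mul_ofReal (a i.castSucc)) intervalIntegrable_deriv]
  simp only [factor_rows, integral_const_mul]

theorem iterative_formula_general (n : ℕ) (lam : Fin (n + 1) → ℂ) (x : Fin (n + 1) → ℝ)
    (hx : Antitone x) :
    (∑ σ : Equiv.Perm (Fin (n + 1)), ((Equiv.Perm.sign σ : ℤ) : ℂ) *
        Complex.exp (∑ k, lam (σ k) * x k)) =
      (∏ i : Fin n, (lam i.castSucc - lam (Fin.last n))) *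
        Complex.exp (lam (Fin.last n) * ∑ k, (x k : ℂ)) *
        ∫ y in Set.Icc (fun k : Fin n => x k.succ) (fun k : Fin n => x k.castSucc),
          ∑ τ : Equiv.Perm (Fin n), ((Equiv.Perm.sign τ : ℤ) : ℂ) *
            Complex.exp (∑ k : Fin n, (lam (τ k).castSucc - lam (Fin.last n)) * y k) := by
  simp only [sum_sign_mul_cexp_eq_det lam,
    sum_sign_mul_cexp_eq_det fun i : Fin n => lam i.castSucc - lam (Fin.last n)]
  rw [det_cexp_eq_cexp_mul_det_cexp_sub lam _ (lam (Fin.last n)),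
    det_cexp_mul_eq_prod_mul_setIntegral_det hx (sub_self _),
    mul_left_comm, mul_assoc]

/-- Iterative formula for the spherical functions of type `A` in the complex case
(here `n = m + 2 ≥ 2`): for arbitrary `λ ∈ ℝⁿ` and weakly decreasing `x ∈ ℝⁿ`,
`∑_{σ∈Sₙ} sgn(σ) e^{∑ λ_{σ(k)} x_k}
  = (∏_{i=1}^{n−1}(λ_i−λ_n)) · e^{λ_n ∑ x_k} ·
    ∫_{y_k ∈ [x_{k+1},x_k]} ∑_{τ∈S_{n−1}} sgn(τ) e^{∑_{k=1}^{n−1} (λ_{τ(k)}−λ_n) y_k} dy`. -/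
theorem iterative_formula (m : ℕ) (lam : Fin (m + 2) → ℝ) (x : Fin (m + 2) → ℝ)
    (hx : Antitone x) :
    (∑ σ : Equiv.Perm (Fin (m + 2)), ((Equiv.Perm.sign σ : ℤ) : ℝ) *
        Real.exp (∑ k, lam (σ k) * x k)) =
      (∏ i : Fin (m + 1), (lam i.castSucc - lam (Fin.last (m + 1)))) *
        Real.exp (lam (Fin.last (m + 1)) * ∑ k, x k) *
        ∫ y in Set.Icc (fun k : Fin (m + 1) => x k.succ) (fun k : Fin (m + 1) => x k.castSucc),
          ∑ τ : Equiv.Perm (Fin (m + 1)), ((Equiv.Perm.sign τ : ℤ) : ℝ) *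
            Real.exp (∑ k : Fin (m + 1),
              (lam (τ k).castSucc - lam (Fin.last (m + 1))) * y k) := by
  exact_mod_cast iterative_formula_general (m + 1) (fun i => (lam i : ℂ)) x hx
end

section
/- (Inverse spherical Fourier transform of the flat heat kernel, type A) For every n ≥ 1, every t > 0, and all x, y ∈ ℝⁿ: ∫_{ℝⁿ} e^{−t|λ|²} · (∑_{σ∈Sₙ} sgn(σ)·exp(i·∑_{k=1}^n λ_{σ(k)} x_k)) · conj(∑_{τ∈Sₙ} sgn(τ)·exp(i·∑_{k=1}^n λ_{τ(k)} y_k)) dλ = n!·(π/t)^{n/2}·e^{−(|x|²+|y|²)/(4t)}·∑_{σ∈Sₙ} sgn(σ)·exp((1/(2t))·∑_{k=1}^n x_{σ(k)} y_k). (This is the type-A instance of the formula p_t^W(X,Y) = C·∫ e^{−|λ|²t} ψ_{iλ}(X) ψ_{−iλ}(Y) π(λ)² dλ for the heat kernel of the flat complex symmetric space, since ψ_{iλ}(x) = c·(∑_σ sgn(σ)e^{i⟨σλ,x⟩})/(π(iλ)π(x)).) -/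
open Finset MeasureTheory

/-! The alternating sums are determinants `det (exp (I λᵢ xⱼ))` and `det (exp (-I λᵢ yⱼ))`, and the
Gaussian weight is a product over the rows. Andréief's identity therefore turns the integral over
`ℝⁿ` into `n!` times the determinant of the one-dimensional integrals
`∫ exp (-t λ²) exp (I λ xᵢ) exp (-I λ yⱼ) dλ`. Each of these is a Gaussian in `xᵢ - yⱼ`; expanding
the square, its `xᵢ²` and `yⱼ²` parts pull out of the rows and columns and leave
`det (exp (xᵢ yⱼ / (2t)))`. -/

section Determinants

open Matrix

variable {ι R 𝕜 : Type*} [Fintype ι] [DecidableEq ι] [CommRing R] [RCLike 𝕜]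

theorem det_eq_sum_sign_mul_prod_row (M : Matrix ι ι R) :
    M.det = ∑ σ : Equiv.Perm ι, ((Equiv.Perm.sign σ : ℤ) : R) * ∏ i, M i (σ i) := by
  rw [← det_transpose, det_apply']
  rfl

theorem det_of_mul_column_mul_row (u v : ι → R) (A : ι → ι → R) :
    det (of fun i j => u i * (v j * A i j)) = (∏ i, u i) * ((∏ j, v j) * det (of A)) := by
  rw [← det_mul_row v (of A)]
  exact det_mul_column u (of fun i j => v j * A i j)

section IndependentRows

variable {α : ι → Type*} [∀ i, MeasurableSpace (α i)] {μ : ∀ i, Measure (α i)}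
  [∀ i, SigmaFinite (μ i)] {F : ∀ i, ι → α i → 𝕜}

theorem integrable_det_of_rows (hF : ∀ i j, Integrable (F i j) (μ i)) :
    Integrable (fun s : ∀ i, α i => det (of fun i j => F i j (s i))) (Measure.pi μ) := by
  simp only [det_eq_sum_sign_mul_prod_row, of_apply]
  exact integrable_finsetSum _ fun σ _ =>
    (Integrable.fintype_prod_dep fun i => hF i (σ i)).const_mul _

theorem integral_det_of_rows (hF : ∀ i j, Integrable (F i j) (μ i)) :
    ∫ s : ∀ i, α i, det (of fun i j => F i j (s i)) ∂Measure.pi μ =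
      det (of fun i j => ∫ a, F i j a ∂μ i) := by
  simp only [det_eq_sum_sign_mul_prod_row, of_apply]
  rw [integral_finsetSum _ fun σ _ =>
    (Integrable.fintype_prod_dep fun i => hF i (σ i)).const_mul _]
  simp only [integral_const_mul, integral_fintype_prod_eq_prod]

end IndependentRows

/-- **Andréief's identity**, the continuous Cauchy–Binet formula. -/
theorem integral_det_mul_det {α : Type*} [MeasurableSpace α] {μ : Measure α} [SigmaFinite μ]
    {f g : ι → α → 𝕜} (hfg : ∀ i j, Integrable (fun a => f i a * g j a) μ) :
    ∫ s : ι → α, det (of fun i j => f j (s i)) * det (of fun i j => g j (s i))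
        ∂Measure.pi (fun _ => μ) =
      (Fintype.card ι).factorial * det (of fun i j => ∫ a, f i a * g j a ∂μ) := by
  set A : Matrix ι ι 𝕜 := of fun i j => ∫ a, f i a * g j a ∂μ
  -- Only the second determinant is expanded: each term is then a determinant whose `i`th row
  -- depends on `s i` alone, so it can be integrated row by row.
  have expand (s : ι → α) : det (of fun i j => f j (s i)) * det (of fun i j => g j (s i)) =
      ∑ σ : Equiv.Perm ι, ((Equiv.Perm.sign σ : ℤ) : 𝕜) *
        det (of fun i j => f j (s i) * g (σ i) (s i)) := by
    rw [det_eq_sum_sign_mul_prod_row (of fun i j => g j (s i)), mul_sum]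
    refine sum_congr rfl fun σ _ => ?_
    simp only [of_apply, mul_comm (f _ _)]
    rw [mul_left_comm, mul_comm (det _), ← det_mul_column]
    rfl
  have integral_term (σ : Equiv.Perm ι) :
      ∫ s : ι → α, det (of fun i j => f j (s i) * g (σ i) (s i)) ∂Measure.pi (fun _ => μ) =
        ((Equiv.Perm.sign σ : ℤ) : 𝕜) * A.det := by
    rw [integral_det_of_rows fun i j => hfg j (σ i), ← det_permute' σ A, ← det_transpose]
    rfl
  simp_rw [expand]
  rw [integral_finsetSum _ fun σ _ =>
    (integrable_det_of_rows fun i j => hfg j (σ i)).const_mul _]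
  simp_rw [integral_const_mul, integral_term, ← mul_assoc, ← Int.cast_mul,
    Int.units_coe_mul_self, Int.cast_one, one_mul]
  rw [sum_const, card_univ, Fintype.card_perm, nsmul_eq_mul]

end Determinants

section Gaussian

open Complex

variable {t : ℂ}

theorem integrable_gaussian_mul_planeWaves (ht : 0 < t.re) (x y : ℂ) :
    Integrable fun l : ℝ => exp (-t * l ^ 2) * exp (I * (l * x)) * exp (-I * (l * y)) := by
  refine (integrable_cexp_quadratic ht (I * (x - y)) 0).congr (.of_forall fun l => ?_)
  simp only [← exp_add]
  ring_nf

theorem integral_gaussian_mul_planeWaves (ht : 0 < t.re) (x y : ℂ) :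
    ∫ l : ℝ, exp (-t * l ^ 2) * exp (I * (l * x)) * exp (-I * (l * y)) =
      exp (-x ^ 2 / (4 * t)) * ((Real.pi / t) ^ (1 / 2 : ℂ) * exp (-y ^ 2 / (4 * t)) *
        exp (1 / (2 * t) * (x * y))) := by
  have ht0 : t ≠ 0 := by rintro rfl; simp at ht
  calc
    _ = ∫ l : ℝ, exp (I * (x - y) * l) * exp (-t * l ^ 2) := by
      congr! 2 with l
      simp only [← exp_add]
      ring_nf
    _ = (Real.pi / t) ^ (1 / 2 : ℂ) * exp (-(x - y) ^ 2 / (4 * t)) :=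
      fourierIntegral_gaussian ht (x - y)
    _ = (Real.pi / t) ^ (1 / 2 : ℂ) *
        exp (-x ^ 2 / (4 * t) + -y ^ 2 / (4 * t) + 1 / (2 * t) * (x * y)) := by
      congr 2
      field_simp
      ring
    _ = _ := by
      rw [exp_add, exp_add]
      ring

end Gaussian

section AlternatingExponentials

open Complex Matrix

variable {ι : Type*} [Fintype ι] [DecidableEq ι]

theorem det_exp_mul_eq_sum_sign_mul_exp (c : ℂ) (a b : ι → ℂ) :
    det (of fun i j => exp (c * (a i * b j))) =
      ∑ σ : Equiv.Perm ι, ((Equiv.Perm.sign σ : ℤ) : ℂ) * exp (c * ∑ k, a (σ k) * b k) := by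
  simp only [det_apply', of_apply, mul_sum, exp_sum]

theorem integral_gaussian_mul_det_planeWaves_mul_det_planeWaves {t : ℂ} (ht : 0 < t.re)
    (x y : ι → ℂ) :
    ∫ lam : ι → ℝ, exp (-t * ∑ k, (lam k : ℂ) ^ 2) *
        det (of fun i j => exp (I * (lam i * x j))) *
        det (of fun i j => exp (-I * (lam i * y j))) =
      (Fintype.card ι).factorial * (Real.pi / t) ^ ((Fintype.card ι : ℂ) / 2) *
        exp (-((∑ k, x k ^ 2) + ∑ k, y k ^ 2) / (4 * t)) *
        det (of fun i j => exp (1 / (2 * t) * (x i * y j))) := by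
  have absorb (lam : ι → ℝ) :
      exp (-t * ∑ k, (lam k : ℂ) ^ 2) * det (of fun i j => exp (I * (lam i * x j))) =
        det (of fun i j => exp (-t * lam i ^ 2) * exp (I * (lam i * x j))) := by
    rw [mul_sum, exp_sum]
    exact (det_mul_column _ _).symm
  have prefactor (z : ι → ℂ) :
      ∏ k, exp (-z k ^ 2 / (4 * t)) = exp (-(∑ k, z k ^ 2) / (4 * t)) := by
    rw [← exp_sum, ← sum_div, sum_neg_distrib]
  simp_rw [absorb]
  rw [volume_pi, integral_det_mul_det
    (f := fun j (l : ℝ) => exp (-t * l ^ 2) * exp (I * (l * x j)))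
    (g := fun j (l : ℝ) => exp (-I * (l * y j)))
    fun i j => integrable_gaussian_mul_planeWaves ht (x i) (y j)]
  simp_rw [integral_gaussian_mul_planeWaves ht]
  rw [det_of_mul_column_mul_row, prod_mul_distrib, prod_const, card_univ, ← cpow_nat_mul,
    mul_one_div, prefactor, prefactor, neg_add, add_div, exp_add]
  ring

theorem inverse_spherical_fourier_heat_general {t : ℂ} (ht : 0 < t.re) (x y : ι → ℂ) :
    (∫ lam : ι → ℝ,
        exp (-t * ∑ k, (lam k : ℂ) ^ 2) *
          (∑ σ : Equiv.Perm ι, ((Equiv.Perm.sign σ : ℤ) : ℂ) *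
            exp (I * ∑ k, lam (σ k) * x k)) *
          (starRingEnd ℂ)
            (∑ τ : Equiv.Perm ι, ((Equiv.Perm.sign τ : ℤ) : ℂ) *
              exp (I * ∑ k, lam (τ k) * y k))) =
      (Fintype.card ι).factorial * (Real.pi / t) ^ ((Fintype.card ι : ℂ) / 2) *
        exp (-((∑ k, x k ^ 2) + ∑ k, (starRingEnd ℂ) (y k) ^ 2) / (4 * t)) *
        ∑ σ : Equiv.Perm ι, ((Equiv.Perm.sign σ : ℤ) : ℂ) *
          exp ((1 / (2 * t)) * ∑ k, x (σ k) * (starRingEnd ℂ) (y k)) := by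
  simpa only [map_sum, map_mul, map_intCast, ← exp_conj, conj_I, conj_ofReal,
    det_exp_mul_eq_sum_sign_mul_exp] using
    integral_gaussian_mul_det_planeWaves_mul_det_planeWaves ht x fun k => (starRingEnd ℂ) (y k)

end AlternatingExponentials

/-- Inverse spherical Fourier transform of the flat heat kernel, type `A`: for `t > 0` and
`x, y ∈ ℝⁿ`,
`∫_{ℝⁿ} e^{−t|λ|²} (∑_σ sgn σ e^{i∑ λ_{σ(k)} x_k}) conj(∑_τ sgn τ e^{i∑ λ_{τ(k)} y_k}) dλ
  = n! (π/t)^{n/2} e^{−(|x|²+|y|²)/(4t)} ∑_σ sgn σ e^{(1/(2t))∑ x_{σ(k)} y_k}`. -/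
theorem inverse_spherical_fourier_heat (n : ℕ) (hn : 1 ≤ n) (t : ℝ) (ht : 0 < t)
    (x y : Fin n → ℝ) :
    (∫ lam : Fin n → ℝ,
        (Real.exp (-t * ∑ k, lam k ^ 2) : ℂ) *
          (∑ σ : Equiv.Perm (Fin n), ((Equiv.Perm.sign σ : ℤ) : ℂ) *
            Complex.exp (Complex.I * ((∑ k, lam (σ k) * x k : ℝ) : ℂ))) *
          (starRingEnd ℂ)
            (∑ τ : Equiv.Perm (Fin n), ((Equiv.Perm.sign τ : ℤ) : ℂ) *
              Complex.exp (Complex.I * ((∑ k, lam (τ k) * y k : ℝ) : ℂ)))) =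
      (((Nat.factorial n : ℝ) * (Real.pi / t) ^ ((n : ℝ) / 2) *
          Real.exp (-((∑ k, x k ^ 2) + ∑ k, y k ^ 2) / (4 * t)) *
          ∑ σ : Equiv.Perm (Fin n), ((Equiv.Perm.sign σ : ℤ) : ℝ) *
            Real.exp ((1 / (2 * t)) * ∑ k, x (σ k) * y k) : ℝ) : ℂ) := by
  have h := inverse_spherical_fourier_heat_general (t := t) ht (fun k => x k) fun k => y k
  simpa [Complex.ofReal_cpow (div_nonneg Real.pi_pos.le ht.le)] using h
end
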